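/- Let 0 < q < 1, let f be in the class S_q^* with Taylor expansion f(z) = z + Σ_{n≥2} a_n z^n on the unit disk, and let μ be any complex number. Then |a_3 − μ a_2²| ≤ max{ |2(1−2μ)(ln q/(q−1))² + 2(ln q/(q²−1))| , 2(ln q/(q²−1)) }. -/

import Mathlib

/-!
If `f` is `q`-starlike then `|f (q z)| ≤ |f z|` on the disk, so a zero of `f` other than `0` would
propagate along the geometric sequence `q ^ n * z` to the simple zero at `0`. Hence
`f z = z * exp (Λ z)`, and the inequality says that `p z = log (f (q z) / f z) / log q`, that is
`p z = 1 + (Λ (q z) - Λ z) / log q`, has nonnegative real part and `p 0 = 1`. The first two Taylor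
coefficients of `p` are `p₁ = (q - 1) / log q * a₂` and
`p₂ = (q ^ 2 - 1) / log q * (a₃ - a₂ ^ 2 / 2)`, so the theorem is an instance of the bound
`|s * p₂ - t * p₁ ^ 2| ≤ 2 * max |s| |s - 2 * t|` for functions `p` of the Carathéodory class. With
`w = (p - 1) / (p + 1)` this is the Keogh–Merkes bound `|s * w₂ + t * w₁ ^ 2| ≤ max |s| |t|`, which
follows from the Schwarz–Pick inequality `|w₂| ≤ 1 - |w₁| ^ 2` for `w z / z`.
-/

open Complex Metric

noncomputable section

/-- The open unit disk in ℂ. -/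
def unitDisk : Set ℂ := ball 0 1

/-- The `q`-difference operator. -/
def Dq (q : ℝ) (f : ℂ → ℂ) (z : ℂ) : ℂ :=
  if z = 0 then deriv f 0 else (f z - f (q * z)) / (z * (1 - q))

/-- The class `A` of normalized analytic functions on the unit disk. -/
def classA (f : ℂ → ℂ) : Prop :=
  DifferentiableOn ℂ f unitDisk ∧ f 0 = 0 ∧ deriv f 0 = 1

/-- The class of `q`-starlike functions. -/
def SqStar (q : ℝ) (f : ℂ → ℂ) : Prop :=
  classA f ∧ ∀ z ∈ unitDisk,
    ‖z * Dq q f z / f z - 1 / (1 - (q : ℂ))‖ ≤ 1 / (1 - q)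

open Filter Set
open scoped ComplexConjugate Nat Topology

section Taylor

theorem iteratedDeriv_comp_mul_left {𝕜 : Type*} [NontriviallyNormedField 𝕜]
    (n : ℕ) (f : 𝕜 → 𝕜) (c x : 𝕜) :
    iteratedDeriv n (fun z => f (c * z)) x = c ^ n * iteratedDeriv n f (c * x) := by
  induction n generalizing x with
  | zero => simp
  | succ n ih =>
    rw [iteratedDeriv_succ, iteratedDeriv_succ, funext ih, deriv_const_mul_field,
      deriv_comp_mul_left, smul_eq_mul]
    ring

theorem iteratedDeriv_comp_mul_left_sub_self {𝕜 : Type*} [NontriviallyNormedField 𝕜]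
    {n : ℕ} {f : 𝕜 → 𝕜} (hf : ContDiffAt 𝕜 n f 0) (c : 𝕜) :
    iteratedDeriv n (fun z => f (c * z) - f z) 0 = (c ^ n - 1) * iteratedDeriv n f 0 := by
  have hfc : ContDiffAt 𝕜 n (fun z => f (c * z)) 0 :=
    ContDiffAt.comp (g := f) 0 (by simpa using hf) (by fun_prop)
  rw [iteratedDeriv_fun_sub hfc hf, iteratedDeriv_comp_mul_left, mul_zero]
  ring

variable {𝕜 : Type*} [NontriviallyNormedField 𝕜] [CompleteSpace 𝕜] [CharZero 𝕜] {f : 𝕜 → 𝕜}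

theorem iteratedDeriv_eq_factorial_mul_coeff {c : 𝕜} {p : FormalMultilinearSeries 𝕜 𝕜 𝕜}
    (hf : HasFPowerSeriesAt f p c) (n : ℕ) : iteratedDeriv n f c = n ! * p.coeff n := by
  rw [hf.eq_formalMultilinearSeries hf.analyticAt.hasFPowerSeriesAt,
    FormalMultilinearSeries.coeff_ofScalars,
    mul_div_cancel₀ _ (Nat.cast_ne_zero.2 n.factorial_ne_zero)]

theorem iteratedDeriv_dslope_same {c : 𝕜} (hf : AnalyticAt 𝕜 f c) (n : ℕ) :
    iteratedDeriv n (dslope f c) c = iteratedDeriv (n + 1) f c / (n + 1) := by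
  obtain ⟨p, hp⟩ := hf
  rw [iteratedDeriv_eq_factorial_mul_coeff hp.has_fpower_series_dslope_fslope,
    iteratedDeriv_eq_factorial_mul_coeff hp, FormalMultilinearSeries.coeff_fslope,
    Nat.factorial_succ]
  have : (n + 1 : 𝕜) ≠ 0 := by exact_mod_cast n.succ_ne_zero
  push_cast
  field_simp

theorem iteratedDeriv_dslope_zero_of_hasSum {a : ℕ → 𝕜}
    (hf : ∀ᶠ z in 𝓝 0, HasSum (fun n => a n * z ^ n) (f z)) (n : ℕ) :
    iteratedDeriv n (dslope f 0) 0 = n ! * a (n + 1) := by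
  have hp : HasFPowerSeriesAt f (FormalMultilinearSeries.ofScalars 𝕜 a) 0 := by
    rw [hasFPowerSeriesAt_iff]
    filter_upwards [hf] with z hz
    simpa [mul_comm] using hz
  rw [iteratedDeriv_eq_factorial_mul_coeff hp.has_fpower_series_dslope_fslope,
    FormalMultilinearSeries.coeff_fslope, FormalMultilinearSeries.coeff_ofScalars]

end Taylor

section SchwarzPick

theorem norm_sub_le_norm_one_sub_conj_mul {a b : ℂ} (ha : ‖a‖ ≤ 1) (hb : ‖b‖ ≤ 1) :
    ‖b - a‖ ≤ ‖1 - conj a * b‖ := by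
  have identity : ‖1 - conj a * b‖ ^ 2 - ‖b - a‖ ^ 2 = (1 - ‖a‖ ^ 2) * (1 - ‖b‖ ^ 2) := by
    simp only [Complex.sq_norm, normSq_apply, sub_re, sub_im, mul_re, mul_im, conj_re, conj_im,
      one_re, one_im]
    ring
  have hprod : 0 ≤ (1 - ‖a‖ ^ 2) * (1 - ‖b‖ ^ 2) :=
    mul_nonneg (sub_nonneg.2 (pow_le_one₀ (norm_nonneg a) ha))
      (sub_nonneg.2 (pow_le_one₀ (norm_nonneg b) hb))
  exact le_of_sq_le_sq (by linarith) (norm_nonneg _)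

theorem one_sub_conj_mul_ne_zero {a b : ℂ} (ha : ‖a‖ < 1) (hb : ‖b‖ ≤ 1) :
    1 - conj a * b ≠ 0 := by
  refine sub_ne_zero.2 fun h => ?_
  have hab : ‖a‖ * ‖b‖ = 1 := by simpa using (congrArg norm h).symm
  exact (mul_lt_one_of_nonneg_of_lt_one_left (norm_nonneg a) ha hb).ne hab

theorem norm_sub_one_le_norm_add_one {z : ℂ} (hz : 0 ≤ z.re) : ‖z - 1‖ ≤ ‖z + 1‖ := by
  refine le_of_sq_le_sq ?_ (norm_nonneg _)
  simp only [Complex.sq_norm, normSq_apply, sub_re, sub_im, add_re, add_im, one_re, one_im]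
  linarith

theorem norm_deriv_le_one_sub_sq_div_of_mapsTo_ball {h : ℂ → ℂ} {c : ℂ} {R : ℝ} (hR : 0 < R)
    (hd : DifferentiableOn ℂ h (ball c R)) (hmaps : MapsTo h (ball c R) (closedBall 0 1)) :
    ‖deriv h c‖ ≤ (1 - ‖h c‖ ^ 2) / R := by
  have hb (z) (hz : z ∈ ball c R) : ‖h z‖ ≤ 1 := mem_closedBall_zero_iff.1 (hmaps hz)
  have hc : c ∈ ball c R := mem_ball_self hR
  have hnhds : ball c R ∈ 𝓝 c := isOpen_ball.mem_nhds hc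
  rcases (hb c hc).eq_or_lt with hc1 | hc1
  · have hmax : IsLocalMax (norm ∘ h) c := by
      filter_upwards [hnhds] with z hz using (hb z hz).trans hc1.ge
    have hconst : h =ᶠ[𝓝 c] fun _ => h c :=
      eventually_eq_of_isLocalMax_norm (hd.eventually_differentiableAt hnhds) hmax
    simp [hconst.deriv_eq, hc1]
  have hden (z) (hz : z ∈ ball c R) : 1 - conj (h c) * h z ≠ 0 :=
    one_sub_conj_mul_ne_zero hc1 (hb z hz)
  set T : ℂ → ℂ := fun z => (h z - h c) / (1 - conj (h c) * h z) with hT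
  have hTd : DifferentiableOn ℂ T (ball c R) :=
    (hd.sub_const _).fun_div ((hd.const_mul _).const_sub 1) hden
  have hTmaps : MapsTo T (ball c R) (closedBall (T c) 1) := fun z hz => by
    rw [show T c = 0 by simp [hT], mem_closedBall_zero_iff, norm_div,
      div_le_one (norm_pos_iff.2 (hden z hz))]
    exact norm_sub_le_norm_one_sub_conj_mul hc1.le (hb z hz)
  have hpos : 0 < 1 - ‖h c‖ ^ 2 := sub_pos.2 (pow_lt_one₀ (norm_nonneg _) hc1 two_ne_zero)
  have hT' : deriv T c = deriv h c / ((1 - ‖h c‖ ^ 2 : ℝ) : ℂ) := by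
    have hh := (hd.differentiableAt hnhds).hasDerivAt
    have hcc : ((1 - ‖h c‖ ^ 2 : ℝ) : ℂ) = 1 - conj (h c) * h c := by
      rw [conj_mul']; push_cast; rfl
    rw [hcc, ((hh.sub_const (h c)).fun_div ((hh.const_mul (conj (h c))).const_sub 1)
      (hden c hc)).deriv]
    have := hden c hc
    field_simp
    ring
  have key := norm_deriv_le_div_of_mapsTo_ball hTd hTmaps hR
  rw [hT', norm_div, norm_real, Real.norm_of_nonneg hpos.le, div_le_iff₀ hpos] at key
  rwa [div_mul_eq_mul_div, one_mul] at key

variable {w : ℂ → ℂ}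

theorem norm_iteratedDeriv_two_div_two_le_of_mapsTo_ball (hd : DifferentiableOn ℂ w (ball 0 1))
    (hmaps : MapsTo w (ball 0 1) (closedBall (w 0) 1)) :
    ‖iteratedDeriv 2 w 0 / 2‖ ≤ 1 - ‖deriv w 0‖ ^ 2 := by
  have hnhds : ball (0 : ℂ) 1 ∈ 𝓝 0 := ball_mem_nhds 0 one_pos
  have hslope : MapsTo (dslope w 0) (ball 0 1) (closedBall 0 1) := fun z hz => by
    simpa using norm_dslope_le_div_of_mapsTo_ball hd hmaps hz
  have hpick := norm_deriv_le_one_sub_sq_div_of_mapsTo_ball one_pos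
    ((differentiableOn_dslope hnhds).2 hd) hslope
  rw [← iteratedDeriv_one, iteratedDeriv_dslope_same (hd.analyticAt hnhds), dslope_same] at hpick
  norm_num at hpick ⊢
  exact hpick

theorem norm_mul_iteratedDeriv_two_div_two_add_mul_sq_le (hd : DifferentiableOn ℂ w (ball 0 1))
    (hmaps : MapsTo w (ball 0 1) (closedBall (w 0) 1)) (s t : ℂ) :
    ‖s * (iteratedDeriv 2 w 0 / 2) + t * deriv w 0 ^ 2‖ ≤ max ‖s‖ ‖t‖ := by
  set r := ‖deriv w 0‖ ^ 2
  have hw2 : ‖iteratedDeriv 2 w 0 / 2‖ ≤ 1 - r :=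
    norm_iteratedDeriv_two_div_two_le_of_mapsTo_ball hd hmaps
  have hr : r ≤ 1 := sub_nonneg.1 ((norm_nonneg _).trans hw2)
  calc ‖s * (iteratedDeriv 2 w 0 / 2) + t * deriv w 0 ^ 2‖
      ≤ ‖s * (iteratedDeriv 2 w 0 / 2)‖ + ‖t * deriv w 0 ^ 2‖ := norm_add_le _ _
    _ ≤ ‖s‖ * (1 - r) + ‖t‖ * r := by
        rw [norm_mul, norm_mul, norm_pow]
        gcongr
    _ ≤ max ‖s‖ ‖t‖ * (1 - r) + max ‖s‖ ‖t‖ * r := by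
        gcongr
        · exact le_max_left _ _
        · exact le_max_right _ _
    _ = max ‖s‖ ‖t‖ := by ring

end SchwarzPick

section Caratheodory

theorem deriv_sub_one_div_add_one_one : deriv (fun ζ : ℂ => (ζ - 1) / (ζ + 1)) 1 = 1 / 2 := by
  have h := ((hasDerivAt_id (1 : ℂ)).sub_const 1).fun_div ((hasDerivAt_id (1 : ℂ)).add_const 1)
    (by norm_num)
  rw [show (fun ζ : ℂ => (ζ - 1) / (ζ + 1)) = fun ζ => (id ζ - 1) / (id ζ + 1) from rfl, h.deriv]
  norm_num

theorem iteratedDeriv_two_sub_one_div_add_one_one :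
    iteratedDeriv 2 (fun ζ : ℂ => (ζ - 1) / (ζ + 1)) 1 = -1 / 2 := by
  have hinv : (fun ζ : ℂ => (ζ - 1) / (ζ + 1)) =ᶠ[𝓝 1] fun ζ => 1 + -2 * (ζ + 1)⁻¹ := by
    filter_upwards [isOpen_ne.mem_nhds (show (1 : ℂ) ≠ -1 by norm_num)] with ζ hζ
    have : ζ + 1 ≠ 0 := fun h => hζ (eq_neg_of_add_eq_zero_left h)
    field_simp
    ring
  rw [hinv.iteratedDeriv_eq, iteratedDeriv_const_add two_pos, iteratedDeriv_const_mul_field,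
    iteratedDeriv_comp_add_const (f := fun ζ : ℂ => ζ⁻¹), iteratedDeriv_eq_iterate, iter_deriv_inv']
  norm_num

/-- The Carathéodory class of normalized analytic functions on the unit disk with nonnegative real
part. The bound `0 ≤ re` is equivalent to the customary `0 < re` by the open mapping theorem. -/
structure IsCaratheodory (p : ℂ → ℂ) : Prop where
  differentiableOn : DifferentiableOn ℂ p unitDisk
  map_zero : p 0 = 1
  re_nonneg : ∀ z ∈ unitDisk, 0 ≤ (p z).re

theorem IsCaratheodory.norm_mul_iteratedDeriv_two_div_two_sub_mul_sq_le {p : ℂ → ℂ}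
    (hp : IsCaratheodory p) (s t : ℂ) :
    ‖s * (iteratedDeriv 2 p 0 / 2) - t * deriv p 0 ^ 2‖ ≤ 2 * max ‖s‖ ‖s - 2 * t‖ := by
  set g : ℂ → ℂ := fun ζ => (ζ - 1) / (ζ + 1) with hg
  have hden (z) (hz : z ∈ unitDisk) : p z + 1 ≠ 0 := fun h => by
    have := congrArg re h
    simp only [add_re, one_re, zero_re] at this
    linarith [hp.re_nonneg z hz]
  have hwd : DifferentiableOn ℂ (g ∘ p) (ball 0 1) :=
    (hp.differentiableOn.sub_const 1).fun_div (hp.differentiableOn.add_const 1) hden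
  have hwmaps : MapsTo (g ∘ p) (ball 0 1) (closedBall ((g ∘ p) 0) 1) := fun z hz => by
    rw [show (g ∘ p) 0 = 0 by simp [hg, hp.map_zero], mem_closedBall_zero_iff, Function.comp_apply,
      norm_div, div_le_one (norm_pos_iff.2 (hden z hz))]
    exact norm_sub_one_le_norm_add_one (hp.re_nonneg z hz)
  have hpa : AnalyticAt ℂ p 0 := hp.differentiableOn.analyticAt (ball_mem_nhds 0 one_pos)
  have hga : AnalyticAt ℂ g (p 0) := by
    rw [hp.map_zero]
    exact (analyticAt_id.sub analyticAt_const).div (analyticAt_id.add analyticAt_const)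
      (by norm_num)
  have hw1 : deriv (g ∘ p) 0 = deriv p 0 / 2 := by
    rw [deriv_comp 0 hga.differentiableAt hpa.differentiableAt, hp.map_zero,
      deriv_sub_one_div_add_one_one]
    ring
  have hw2 : iteratedDeriv 2 (g ∘ p) 0 = iteratedDeriv 2 p 0 / 2 - deriv p 0 ^ 2 / 2 := by
    rw [iteratedDeriv_comp_two hga.contDiffAt hpa.contDiffAt, hp.map_zero,
      deriv_sub_one_div_add_one_one, iteratedDeriv_two_sub_one_div_add_one_one]
    ring
  calc ‖s * (iteratedDeriv 2 p 0 / 2) - t * deriv p 0 ^ 2‖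
      = ‖2 * (s * (iteratedDeriv 2 (g ∘ p) 0 / 2) + (s - 2 * t) * deriv (g ∘ p) 0 ^ 2)‖ := by
        rw [hw1, hw2]
        ring_nf
    _ = 2 * ‖s * (iteratedDeriv 2 (g ∘ p) 0 / 2) + (s - 2 * t) * deriv (g ∘ p) 0 ^ 2‖ := by
        rw [norm_mul, norm_ofNat]
    _ ≤ 2 * max ‖s‖ ‖s - 2 * t‖ := by
        gcongr
        exact norm_mul_iteratedDeriv_two_div_two_add_mul_sq_le hwd hwmaps _ _

end Caratheodory

section Logarithm

theorem exists_differentiableOn_eqOn_exp {F : ℂ → ℂ} {c l : ℂ} {R : ℝ}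
    (hF : DifferentiableOn ℂ F (ball c R)) (hne : ∀ z ∈ ball c R, F z ≠ 0) (hl : F c = exp l) :
    ∃ Λ : ℂ → ℂ, DifferentiableOn ℂ Λ (ball c R) ∧ Λ c = l ∧ EqOn F (exp ∘ Λ) (ball c R) := by
  have hlog : DifferentiableOn ℂ (logDeriv F) (ball c R) := (hF.deriv isOpen_ball).div hF hne
  obtain ⟨Λ, hΛc, hΛ⟩ := hlog.isExactOn_ball.with_val_at c l
  have hΛd : DifferentiableOn ℂ Λ (ball c R) :=
    fun z hz => (hΛ z hz).differentiableAt.differentiableWithinAt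
  refine ⟨Λ, hΛd, hΛc, fun z hz => ?_⟩
  have hlogDeriv : EqOn (logDeriv F) (logDeriv (exp ∘ Λ)) (ball c R) := fun x hx => by
    rw [logDeriv_comp differentiableAt_exp (hΛ x hx).differentiableAt, logDeriv_exp,
      (hΛ x hx).deriv, Pi.one_apply, one_mul]
  obtain ⟨k, -, hk⟩ := (logDeriv_eqOn_iff hF hΛd.cexp isOpen_ball
    (convex_ball c R).isPreconnected (fun x _ => exp_ne_zero (Λ x)) hne).1 hlogDeriv
  have hk1 : k = 1 := by
    have := hk (mem_ball_self (pos_of_mem_ball hz))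
    rw [hl, Pi.smul_apply, hΛc, smul_eq_mul] at this
    exact (mul_eq_right₀ (exp_ne_zero l)).1 this.symm
  simpa [hk1] using hk hz

theorem iteratedDeriv_two_cexp_comp {Λ : ℂ → ℂ} {c : ℂ} (hΛ : ContDiffAt ℂ 2 Λ c) :
    iteratedDeriv 2 (exp ∘ Λ) c = exp (Λ c) * (deriv Λ c ^ 2 + iteratedDeriv 2 Λ c) := by
  rw [iteratedDeriv_comp_two contDiff_exp.contDiffAt hΛ]
  simp only [iteratedDeriv_eq_iterate, iter_deriv_exp, Complex.deriv_exp]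
  ring

end Logarithm

section Coefficients

variable {f Λ : ℂ → ℂ} {a : ℕ → ℂ}

theorem deriv_zero_of_dslope_eventuallyEq_exp_comp
    (ha : ∀ᶠ z in 𝓝 0, HasSum (fun n => a n * z ^ n) (f z))
    (hΛ : DifferentiableAt ℂ Λ 0) (hΛ0 : Λ 0 = 0) (hexp : dslope f 0 =ᶠ[𝓝 0] exp ∘ Λ) :
    deriv Λ 0 = a 2 := by
  have h := iteratedDeriv_dslope_zero_of_hasSum ha 1
  rw [hexp.iteratedDeriv_eq, iteratedDeriv_one, Function.comp_def, deriv_cexp hΛ, hΛ0] at h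
  simpa using h

theorem iteratedDeriv_two_zero_of_dslope_eventuallyEq_exp_comp
    (ha : ∀ᶠ z in 𝓝 0, HasSum (fun n => a n * z ^ n) (f z))
    (hΛ : ContDiffAt ℂ 2 Λ 0) (hΛ0 : Λ 0 = 0) (hexp : dslope f 0 =ᶠ[𝓝 0] exp ∘ Λ) :
    iteratedDeriv 2 Λ 0 = 2 * a 3 - a 2 ^ 2 := by
  have h := iteratedDeriv_dslope_zero_of_hasSum ha 2
  rw [hexp.iteratedDeriv_eq, iteratedDeriv_two_cexp_comp hΛ, hΛ0,
    deriv_zero_of_dslope_eventuallyEq_exp_comp ha (hΛ.differentiableAt two_ne_zero) hΛ0 hexp] at h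
  simp only [exp_zero, one_mul, Nat.factorial_two, Nat.cast_ofNat, Nat.reduceAdd] at h
  linear_combination h

end Coefficients

section QStarlike

variable {q : ℝ} {f : ℂ → ℂ}

theorem mul_mem_unitDisk (hq0 : 0 ≤ q) (hq1 : q ≤ 1) {z : ℂ} (hz : z ∈ unitDisk) :
    q * z ∈ unitDisk := by
  rw [unitDisk, mem_ball_zero_iff] at hz ⊢
  rw [norm_mul, norm_real, Real.norm_of_nonneg hq0]
  exact (mul_le_of_le_one_left (norm_nonneg z) hq1).trans_lt hz

theorem classA.mul_dslope (hf : classA f) (z : ℂ) : z * dslope f 0 z = f z := by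
  simpa using sub_smul_dslope_of_zero hf.2.1 z

theorem classA.eventually_ne_zero (hf : classA f) {z : ℂ} (hz : z ∈ unitDisk) :
    ∀ᶠ w in 𝓝[≠] z, f w ≠ 0 := by
  by_contra h
  have hfreq : ∃ᶠ w in 𝓝[≠] z, f w = 0 := h
  have hzero : EqOn f 0 unitDisk :=
    (hf.1.analyticOnNhd isOpen_ball).eqOn_zero_of_preconnected_of_frequently_eq_zero
      (convex_ball 0 1).isPreconnected hz hfreq
  have hderiv : deriv f 0 = 0 := by
    rw [(hzero.eventuallyEq_of_mem (ball_mem_nhds 0 one_pos)).deriv_eq]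
    exact deriv_const 0 0
  exact one_ne_zero (hf.2.2.symm.trans hderiv)

theorem SqStar.norm_comp_mul_le_of_ne_zero (hq1 : q < 1) (hf : SqStar q f) {z : ℂ}
    (hz : z ∈ unitDisk) (hfz : f z ≠ 0) : ‖f (q * z)‖ ≤ ‖f z‖ := by
  have hz0 : z ≠ 0 := fun h => hfz (h ▸ hf.1.2.1)
  have hq : 0 < 1 - q := sub_pos.2 hq1
  have hqc : (1 : ℂ) - q ≠ 0 := by exact_mod_cast hq.ne'
  have hquot : z * Dq q f z / f z - 1 / (1 - (q : ℂ)) = -(f (q * z) / f z) / ((1 - q : ℝ) : ℂ) := by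
    rw [Dq, if_neg hz0]
    push_cast
    field_simp
    ring
  have hle := hf.2 z hz
  rwa [hquot, norm_div, norm_neg, norm_div, norm_real, Real.norm_of_nonneg hq.le,
    div_le_div_iff_of_pos_right hq, div_le_one (norm_pos_iff.2 hfz)] at hle

theorem SqStar.norm_comp_mul_le (hq0 : 0 ≤ q) (hq1 : q < 1) (hf : SqStar q f) {z : ℂ}
    (hz : z ∈ unitDisk) : ‖f (q * z)‖ ≤ ‖f z‖ := by
  have hcont {w : ℂ} (hw : w ∈ unitDisk) : ContinuousAt f w :=
    hf.1.1.continuousOn.continuousAt (isOpen_ball.mem_nhds hw)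
  have hcomp : ContinuousAt (fun w => f (q * w)) z :=
    ContinuousAt.comp (g := f) (hcont (mul_mem_unitDisk hq0 hq1.le hz)) (by fun_prop)
  -- At a zero of `f` the quotient in `SqStar` is `0` by convention and says nothing about
  -- `f (q * z)`, so the inequality is extended there by continuity, zeros being isolated.
  refine le_of_tendsto_of_tendsto (hcomp.norm.mono_left nhdsWithin_le_nhds)
    ((hcont hz).norm.mono_left (nhdsWithin_le_nhds (s := {z}ᶜ))) ?_
  filter_upwards [hf.1.eventually_ne_zero hz, nhdsWithin_le_nhds (isOpen_ball.mem_nhds hz)]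
    with w hfw hw using hf.norm_comp_mul_le_of_ne_zero hq1 hw hfw

theorem SqStar.ne_zero (hq0 : 0 < q) (hq1 : q < 1) (hf : SqStar q f) {z : ℂ} (hz : z ∈ unitDisk)
    (hz0 : z ≠ 0) : f z ≠ 0 := by
  intro hfz
  have horbit (n : ℕ) : (q : ℂ) ^ n * z ∈ unitDisk ∧ f ((q : ℂ) ^ n * z) = 0 := by
    induction n with
    | zero => simpa using ⟨hz, hfz⟩
    | succ n ih =>
      rw [pow_succ', mul_assoc]
      refine ⟨mul_mem_unitDisk hq0.le hq1.le ih.1, norm_le_zero_iff.1 ?_⟩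
      simpa [ih.2] using hf.norm_comp_mul_le hq0.le hq1 ih.1
  have hlim : Tendsto (fun n : ℕ => (q : ℂ) ^ n * z) atTop (𝓝[≠] 0) := by
    refine tendsto_nhdsWithin_iff.2 ⟨?_, .of_forall fun n =>
      mul_ne_zero (pow_ne_zero n (ofReal_ne_zero.2 hq0.ne')) hz0⟩
    have hq : ‖(q : ℂ)‖ < 1 := by rwa [norm_real, Real.norm_of_nonneg hq0.le]
    simpa using (tendsto_pow_atTop_nhds_zero_of_norm_lt_one hq).mul_const z
  obtain ⟨n, hn⟩ := (hlim.eventually (hf.1.eventually_ne_zero (mem_ball_self one_pos))).exists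
  exact hn (horbit n).2

theorem SqStar.dslope_ne_zero (hq0 : 0 < q) (hq1 : q < 1) (hf : SqStar q f) {z : ℂ}
    (hz : z ∈ unitDisk) : dslope f 0 z ≠ 0 := by
  rcases eq_or_ne z 0 with rfl | hz0
  · simp [hf.1.2.2]
  · exact right_ne_zero_of_mul (hf.1.mul_dslope z ▸ hf.ne_zero hq0 hq1 hz hz0)

theorem SqStar.mul_norm_dslope_mul_le (hq0 : 0 ≤ q) (hq1 : q < 1) (hf : SqStar q f) {z : ℂ}
    (hz : z ∈ unitDisk) : q * ‖dslope f 0 (q * z)‖ ≤ ‖dslope f 0 z‖ := by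
  rcases eq_or_ne z 0 with rfl | hz0
  · simpa [hf.1.2.2] using hq1.le
  have hle := hf.norm_comp_mul_le hq0 hq1 hz
  rw [← hf.1.mul_dslope, ← hf.1.mul_dslope z, mul_assoc, norm_mul, norm_mul, norm_mul, norm_real,
    Real.norm_of_nonneg hq0, mul_left_comm] at hle
  exact le_of_mul_le_mul_left hle (norm_pos_iff.2 hz0)

theorem SqStar.exists_dslope_eqOn_exp (hq0 : 0 < q) (hq1 : q < 1) (hf : SqStar q f) :
    ∃ Λ : ℂ → ℂ, DifferentiableOn ℂ Λ unitDisk ∧ Λ 0 = 0 ∧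
      EqOn (dslope f 0) (exp ∘ Λ) unitDisk :=
  exists_differentiableOn_eqOn_exp
    ((differentiableOn_dslope (ball_mem_nhds 0 one_pos)).2 hf.1.1)
    (fun _ hz => hf.dslope_ne_zero hq0 hq1 hz) (by simp [hf.1.2.2])

/-- The function `log (f (q z) / f z) / log q` for `f z = z * exp (Λ z)`, which is normalized to
take the value `1` at `0`; it plays for `q`-starlike functions the role of `z f' z / f z` for
starlike ones. -/
def qLogRatio (q : ℝ) (Λ : ℂ → ℂ) (z : ℂ) : ℂ :=
  1 + (Λ (q * z) - Λ z) / Real.log q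

variable {Λ : ℂ → ℂ}

theorem iteratedDeriv_qLogRatio_zero {n : ℕ} (hn : 0 < n) (hΛ : ContDiffAt ℂ n Λ 0) :
    iteratedDeriv n (qLogRatio q Λ) 0 = ((q : ℂ) ^ n - 1) / Real.log q * iteratedDeriv n Λ 0 := by
  unfold qLogRatio
  rw [iteratedDeriv_const_add hn, iteratedDeriv_div_const, iteratedDeriv_comp_mul_left_sub_self hΛ]
  ring

theorem SqStar.isCaratheodory_qLogRatio (hq0 : 0 < q) (hq1 : q < 1) (hf : SqStar q f)
    (hΛ : DifferentiableOn ℂ Λ unitDisk) (hexp : EqOn (dslope f 0) (exp ∘ Λ) unitDisk) :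
    IsCaratheodory (qLogRatio q Λ) where
  differentiableOn :=
    (((hΛ.comp (differentiableOn_id.const_mul _)
      fun _ hz => mul_mem_unitDisk hq0.le hq1.le hz).sub hΛ).div_const _).const_add 1
  map_zero := by simp [qLogRatio]
  re_nonneg z hz := by
    have hlog : Real.log q < 0 := Real.log_neg hq0 hq1
    have hle := hf.mul_norm_dslope_mul_le hq0.le hq1 hz
    rw [hexp hz, hexp (mul_mem_unitDisk hq0.le hq1.le hz), Function.comp_apply,
      Function.comp_apply, norm_exp, norm_exp] at hle
    have hre : Real.log q + (Λ (q * z)).re ≤ (Λ z).re := by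
      rwa [← Real.exp_le_exp, Real.exp_add, Real.exp_log hq0]
    rw [qLogRatio, add_re, one_re, div_ofReal_re, sub_re, ← neg_le_iff_add_nonneg',
      le_div_iff_of_neg hlog]
    linarith

theorem SqStar.exists_isCaratheodory {a : ℕ → ℂ} (hq0 : 0 < q) (hq1 : q < 1) (hf : SqStar q f)
    (ha : ∀ᶠ z in 𝓝 0, HasSum (fun n => a n * z ^ n) (f z)) :
    ∃ p : ℂ → ℂ, IsCaratheodory p ∧ deriv p 0 = ((q : ℂ) - 1) / Real.log q * a 2 ∧
      iteratedDeriv 2 p 0 = ((q : ℂ) ^ 2 - 1) / Real.log q * (2 * a 3 - a 2 ^ 2) := by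
  obtain ⟨Λ, hΛ, hΛ0, hexp⟩ := hf.exists_dslope_eqOn_exp hq0 hq1
  have hnhds : unitDisk ∈ 𝓝 0 := ball_mem_nhds 0 one_pos
  have hΛa : AnalyticAt ℂ Λ 0 := hΛ.analyticAt hnhds
  have hexp0 := hexp.eventuallyEq_of_mem hnhds
  refine ⟨qLogRatio q Λ, hf.isCaratheodory_qLogRatio hq0 hq1 hΛ hexp, ?_, ?_⟩
  · rw [← iteratedDeriv_one, iteratedDeriv_qLogRatio_zero one_pos hΛa.contDiffAt, iteratedDeriv_one,
      deriv_zero_of_dslope_eventuallyEq_exp_comp ha hΛa.differentiableAt hΛ0 hexp0, pow_one]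
  · rw [iteratedDeriv_qLogRatio_zero two_pos hΛa.contDiffAt,
      iteratedDeriv_two_zero_of_dslope_eventuallyEq_exp_comp ha hΛa.contDiffAt hΛ0 hexp0]

end QStarlike

/-- The Fekete–Szegő problem for the class `S_q^*`. -/
theorem fekete_szego_SqStar (q : ℝ) (hq0 : 0 < q) (hq1 : q < 1)
    (f : ℂ → ℂ) (hf : SqStar q f) (a : ℕ → ℂ)
    (ha0 : a 0 = 0) (ha1 : a 1 = 1)
    (ha : ∀ z ∈ unitDisk, HasSum (fun n => a n * z ^ n) (f z))
    (μ : ℂ) :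
    ‖a 3 - μ * (a 2) ^ 2‖ ≤
      max (‖2 * (1 - 2 * μ) * ((Real.log q / (q - 1) : ℝ) : ℂ) ^ 2
            + 2 * ((Real.log q / (q ^ 2 - 1) : ℝ) : ℂ)‖)
          (2 * (Real.log q / (q ^ 2 - 1))) := by
  obtain ⟨p, hp, hp1, hp2⟩ := hf.exists_isCaratheodory hq0 hq1
    (eventually_of_mem (ball_mem_nhds 0 one_pos) ha)
  have hlog : Real.log q < 0 := Real.log_neg hq0 hq1
  have hq2 : q ^ 2 - 1 < 0 := sub_neg.2 (pow_lt_one₀ hq0.le hq1 two_ne_zero)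
  have hK : 0 < Real.log q / (q ^ 2 - 1) := div_pos_of_neg_of_neg hlog hq2
  set x : ℂ := ((Real.log q / (q - 1) : ℝ) : ℂ) with hx
  set K : ℝ := Real.log q / (q ^ 2 - 1)
  have hcoeff : a 3 - μ * a 2 ^ 2 =
      K * (iteratedDeriv 2 p 0 / 2) - (μ - 1 / 2) * x ^ 2 * deriv p 0 ^ 2 := by
    have hlogc : (Real.log q : ℂ) ≠ 0 := ofReal_ne_zero.2 hlog.ne
    have hq1c : (q : ℂ) - 1 ≠ 0 := by exact_mod_cast (sub_neg.2 hq1).ne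
    have hq2c : (q : ℂ) ^ 2 - 1 ≠ 0 := by exact_mod_cast hq2.ne
    rw [hp1, hp2, hx]
    push_cast [K]
    field_simp
    ring
  calc ‖a 3 - μ * a 2 ^ 2‖ ≤ 2 * max ‖(K : ℂ)‖ ‖K - 2 * ((μ - 1 / 2) * x ^ 2)‖ :=
        hcoeff ▸ hp.norm_mul_iteratedDeriv_two_div_two_sub_mul_sq_le _ _
    _ = max ‖2 * (1 - 2 * μ) * x ^ 2 + 2 * K‖ (2 * K) := by
        rw [show 2 * (1 - 2 * μ) * x ^ 2 + 2 * K = 2 * (K - 2 * ((μ - 1 / 2) * x ^ 2)) by ring,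
          norm_mul, norm_ofNat, norm_real, Real.norm_of_nonneg hK.le, max_comm,
          mul_max_of_nonneg _ _ zero_le_two]
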